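/- Equip V with the sesquilinear inner product making the basis (e_{π₀,π₁,j}) orthonormal. Then for all u, v ∈ V: ⟨P₁ u, v⟩ = q^{1/2} ⟨u, P₋₁ v⟩, ⟨L⁺ u, v⟩ = q^{−3/2} ⟨u, L⁻ v⟩, ⟨P₀ u, v⟩ = ⟨u, P₀ v⟩, ⟨K u, v⟩ = ⟨u, K v⟩, and ⟨Λ u, v⟩ = ⟨u, Λ⁻¹ v⟩. That is, the representation is a *-representation realizing the conjugation relations (p¹)* = q^{1/2} p^{−1}, (L^{01})* = q^{−3/2} L^{−1,0}, (p⁰)* = p⁰, (k¹)* = k¹, Λ* = Λ⁻¹ of U_q(e³). -/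

import Mathlib

/- The irreducible Hilbert-space representation of highest weight `w` of the q-Euclidean
algebra `U_q(e³)` (Theorem 3 of the paper): `S` is the index set of the q-lattice,
`V` the space of finitely supported functions `S → ℂ` with canonical basis `e`,
and `P0, P1, Pm1, Lam, LamInv, K, Lp, Lm` realize the generators
`p⁰, p¹, p⁻¹, Λ, Λ⁻¹, k¹, L^{01}, L^{−1,0}`. -/

noncomputable section

/-- The q-lattice index set `S = {(π₀,π₁,j) ∈ ℤ³ : π₀ ≥ 0, j ≤ π₀}`. -/
structure SIdx : Type where
  π0 : ℤ
  π1 : ℤ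
  j : ℤ
  hπ0 : 0 ≤ π0
  hj : j ≤ π0

instance : DecidableEq SIdx := fun _ _ => Classical.dec _

/-- `V`: finitely supported functions `S → ℂ`. -/
abbrev V : Type := SIdx →₀ ℂ

/-- The canonical basis vector `e_{π₀,π₁,j}`. -/
def e (s : SIdx) : V := Finsupp.single s 1

/-- The linear operator on `V` determined by its values on the canonical basis. -/
def opOf (g : SIdx → V) : V →ₗ[ℂ] V :=
  Finsupp.lsum ℂ fun s => LinearMap.toSpanSingleton ℂ V (g s)

/-- `P₀ e_{π₀,π₁,j} = ε M (1+q⁻¹)^(1/2) q^(2+π₀+π₁) e_{π₀,π₁,j}`. -/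
def P0 (q M ε : ℝ) : V →ₗ[ℂ] V :=
  opOf fun s => ((ε * M * Real.sqrt (1 + q⁻¹) * q ^ (2 + s.π0 + s.π1) : ℝ) : ℂ) • e s

/-- `P₁ e_{π₀,π₁,j} = M (1−q^(2π₀+2))^(1/2) q^(1+π₁) e_{π₀+1,π₁,j+1}`. -/
def P1 (q M : ℝ) : V →ₗ[ℂ] V :=
  opOf fun s => ((M * Real.sqrt (1 - q ^ (2 * s.π0 + 2)) * q ^ (1 + s.π1) : ℝ) : ℂ) •
    e ⟨s.π0 + 1, s.π1, s.j + 1, by have h0 := s.hπ0; have h1 := s.hj; omega, by have h0 := s.hπ0; have h1 := s.hj; omega⟩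

/-- `P₋₁ e_{π₀,π₁,j} = M (1−q^(2π₀))^(1/2) q^(1/2+π₁) e_{π₀−1,π₁,j−1}` (zero if `π₀ = 0`). -/
def Pm1 (q M : ℝ) : V →ₗ[ℂ] V :=
  opOf fun s =>
    if h : 0 < s.π0 then
      ((M * Real.sqrt (1 - q ^ (2 * s.π0)) * q ^ ((1 : ℝ) / 2 + (s.π1 : ℝ)) : ℝ) : ℂ) •
        e ⟨s.π0 - 1, s.π1, s.j - 1, by have h0 := s.hπ0; have h1 := s.hj; omega, by have h0 := s.hπ0; have h1 := s.hj; omega⟩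
    else 0

/-- `Λ e_{π₀,π₁,j} = e_{π₀,π₁+1,j}`. -/
def Lam : V →ₗ[ℂ] V := opOf fun s => e ⟨s.π0, s.π1 + 1, s.j, s.hπ0, s.hj⟩

/-- `Λ⁻¹ e_{π₀,π₁,j} = e_{π₀,π₁−1,j}`. -/
def LamInv : V →ₗ[ℂ] V := opOf fun s => e ⟨s.π0, s.π1 - 1, s.j, s.hπ0, s.hj⟩

/-- `K e_{π₀,π₁,j} = q^(2j+w) e_{π₀,π₁,j}`. -/
def K (q w : ℝ) : V →ₗ[ℂ] V :=
  opOf fun s => ((q ^ (2 * (s.j : ℝ) + w) : ℝ) : ℂ) • e s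

/-- `L⁺ e_{π₀,π₁,j} = q^(−3/2−π₀) [(1+q^(π₀−j−w))(1−q^(π₀−j))/((q⁻¹−1)(1−q))]^(1/2)
    e_{π₀,π₁,j+1}` (zero if `j = π₀`). -/
def Lp (q w : ℝ) : V →ₗ[ℂ] V :=
  opOf fun s =>
    if h : s.j < s.π0 then
      ((q ^ (-(3 : ℝ) / 2 - (s.π0 : ℝ)) *
          Real.sqrt ((1 + q ^ ((s.π0 : ℝ) - (s.j : ℝ) - w)) *
            (1 - q ^ ((s.π0 : ℝ) - (s.j : ℝ))) / ((q⁻¹ - 1) * (1 - q))) : ℝ) : ℂ) •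
        e ⟨s.π0, s.π1, s.j + 1, s.hπ0, by have h0 := s.hπ0; have h1 := s.hj; omega⟩
    else 0

/-- `L⁻ e_{π₀,π₁,j} = q^(−π₀) [(1+q^(π₀−j+1−w))(1−q^(π₀−j+1))/((q⁻¹−1)(1−q))]^(1/2)
    e_{π₀,π₁,j−1}`. -/
def Lm (q w : ℝ) : V →ₗ[ℂ] V :=
  opOf fun s =>
    ((q ^ (-(s.π0 : ℝ)) *
        Real.sqrt ((1 + q ^ ((s.π0 : ℝ) - (s.j : ℝ) + 1 - w)) *
          (1 - q ^ ((s.π0 : ℝ) - (s.j : ℝ) + 1)) / ((q⁻¹ - 1) * (1 - q))) : ℝ) : ℂ) •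
      e ⟨s.π0, s.π1, s.j - 1, s.hπ0, by have h0 := s.hπ0; have h1 := s.hj; omega⟩

/-- The sesquilinear inner product on `V` making the canonical basis orthonormal
(antilinear in the first argument). -/
def inn (u v : V) : ℂ := Finsupp.sum u fun s c => (starRingEnd ℂ) c * v s

/-!
Each of the operators moves a basis vector to a scalar multiple of the basis vector at a fixed
displacement in `ℤ³`, or to `0` if that point lies off the lattice `S`. For operators `A` and `B`
shifting by opposite displacements the relation `⟨A u, v⟩ = c ⟨u, B v⟩` only has to be checked on
the pairs of lattice points joined by the displacement, where it compares one weight of `A` with one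
weight of `B`. The boundary conventions need no separate treatment: a point moved off the lattice
belongs to no such pair.
-/

section StandardForm

variable {ι κ R : Type*} [CommSemiring R] [StarRing R]

/-- The sesquilinear form on finitely supported functions for which the canonical basis is
orthonormal, antilinear in the first argument. -/
def stdForm : (ι →₀ R) →ₗ⋆[R] (ι →₀ R) →ₗ[R] R :=
  LinearMap.mk₂'ₛₗ (starRingEnd R) (RingHom.id R)
    (fun u v => u.sum fun i a => starRingEnd R a * v i)
    (fun _ _ _ => Finsupp.sum_add_index' (by simp) (by simp [add_mul]))
    (fun a u v => by simp [Finsupp.sum_smul_index', Finsupp.mul_sum, mul_assoc])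
    (fun _ _ _ => by simp [mul_add, Finsupp.sum_add])
    (fun a u v => by simp [Finsupp.mul_sum, mul_left_comm])

lemma stdForm_single_left (i : ι) (a : R) (v : ι →₀ R) :
    stdForm (Finsupp.single i a) v = starRingEnd R a * v i := by
  simp [stdForm]

lemma stdForm_single_right (u : ι →₀ R) (i : ι) (a : R) :
    stdForm u (Finsupp.single i a) = starRingEnd R (u i) * a := by
  classical
  simp +contextual [stdForm, Finsupp.single_apply, Finsupp.sum]

lemma stdForm_map_left_of_single {A : (ι →₀ R) →ₗ[R] (κ →₀ R)} {B : (κ →₀ R) →ₗ[R] (ι →₀ R)} {c : R}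
    (h : ∀ i k, starRingEnd R (A (Finsupp.single i 1) k) = c * B (Finsupp.single k 1) i)
    (u : ι →₀ R) (v : κ →₀ R) : stdForm (A u) v = c * stdForm u (B v) := by
  have hcomp : stdForm.comp A = c • stdForm.compl₂ B :=
    LinearMap.ext_basis Finsupp.basisSingleOne Finsupp.basisSingleOne fun i k => by
      simp [stdForm_single_left, stdForm_single_right, h]
  exact LinearMap.congr_fun₂ hcomp u v

end StandardForm

section WeightedShift

variable {ι G R : Type*} [CommSemiring R]

/-- `A` is the weighted shift by `d` with weights `a`, where `x i` is the position of the index `i`: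
it sends the `i`-th basis vector to `a i` times the basis vector at position `x i + d`, and to `0`
if no index has that position. -/
def IsWeightedShift [Add G] (x : ι → G) (d : G) (a : ι → R) (A : (ι →₀ R) →ₗ[R] (ι →₀ R)) : Prop :=
  ∀ i, (∃ k, A (Finsupp.single i 1) = a i • Finsupp.single k 1 ∧ x k = x i + d) ∨
    A (Finsupp.single i 1) = 0 ∧ ∀ k, x k ≠ x i + d

namespace IsWeightedShift

lemma apply_single_apply [Add G] [DecidableEq G] {x : ι → G} {d : G} {a : ι → R}
    {A : (ι →₀ R) →ₗ[R] (ι →₀ R)} (hA : IsWeightedShift x d a A) (hx : Function.Injective x)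
    (i k : ι) : A (Finsupp.single i 1) k = if x k = x i + d then a i else 0 := by
  classical
  rcases hA i with ⟨l, hAi, hl⟩ | ⟨hAi, hne⟩
  · simp [hAi, ← hl, hx.eq_iff, Finsupp.single_apply, eq_comm]
  · simp [hAi, hne k]

lemma stdForm_map_left [AddGroup G] [StarRing R] {x : ι → G} {d : G} {a b : ι → R}
    {A B : (ι →₀ R) →ₗ[R] (ι →₀ R)} {c : R} (hA : IsWeightedShift x d a A)
    (hB : IsWeightedShift x (-d) b B) (hx : Function.Injective x)
    (hab : ∀ i k, x k = x i + d → starRingEnd R (a i) = c * b k) (u v : ι →₀ R) :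
    stdForm (A u) v = c * stdForm u (B v) := by
  classical
  refine stdForm_map_left_of_single (fun i k => ?_) u v
  rw [hA.apply_single_apply hx, hB.apply_single_apply hx, ← sub_eq_add_neg, eq_sub_iff_add_eq,
    eq_comm (a := x i + d)]
  split_ifs with hik
  · exact hab i k hik
  · simp

end IsWeightedShift

end WeightedShift

namespace SIdx

/-- The position of a lattice index in `ℤ³`, where the operators act by displacements. -/
def coords (s : SIdx) : ℤ × ℤ × ℤ := (s.π0, s.π1, s.j)

lemma coords_injective : Function.Injective coords := by
  rintro ⟨⟩ ⟨⟩ h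
  simpa [coords] using h

lemma coords_eq_add_iff {s t : SIdx} {m n k : ℤ} :
    t.coords = s.coords + (m, n, k) ↔ t.π0 = s.π0 + m ∧ t.π1 = s.π1 + n ∧ t.j = s.j + k := by
  simp [coords]

end SIdx

lemma inn_eq_stdForm (u v : V) : inn u v = stdForm u v := rfl

lemma IsWeightedShift.inn_map_left {d : ℤ × ℤ × ℤ} {a b : SIdx → ℂ} {A B : V →ₗ[ℂ] V} {c : ℂ}
    (hA : IsWeightedShift SIdx.coords d a A) (hB : IsWeightedShift SIdx.coords (-d) b B)
    (hab : ∀ s t : SIdx, t.coords = s.coords + d → starRingEnd ℂ (a s) = c * b t) (u v : V) :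
    inn (A u) v = c * inn u (B v) := by
  simpa only [inn_eq_stdForm] using hA.stdForm_map_left hB SIdx.coords_injective hab u v

lemma isWeightedShift_opOf {g : SIdx → V} {d : ℤ × ℤ × ℤ} {a : SIdx → ℂ}
    (h : ∀ s, (∃ t, g s = a s • e t ∧ t.coords = s.coords + d) ∨
      g s = 0 ∧ ∀ t : SIdx, t.coords ≠ s.coords + d) :
    IsWeightedShift SIdx.coords d a (opOf g) := by
  intro s
  have hs : opOf g (Finsupp.single s 1) = g s := by simp [opOf]
  rw [hs]
  exact h s

section Generators

variable (q M w : ℝ)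

lemma isWeightedShift_P1 :
    IsWeightedShift SIdx.coords (1, 0, 1)
      (fun s => ((M * √(1 - q ^ (2 * s.π0 + 2)) * q ^ (1 + s.π1) : ℝ) : ℂ)) (P1 q M) :=
  isWeightedShift_opOf fun _ => .inl ⟨_, rfl, by simp [SIdx.coords]⟩

lemma isWeightedShift_Pm1 :
    IsWeightedShift SIdx.coords (-(1, 0, 1))
      (fun s => ((M * √(1 - q ^ (2 * s.π0)) * q ^ ((1 : ℝ) / 2 + (s.π1 : ℝ)) : ℝ) : ℂ))
      (Pm1 q M) := by
  refine isWeightedShift_opOf fun s => ?_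
  split_ifs with h
  · exact .inl ⟨_, rfl, by simp [SIdx.coords, sub_eq_add_neg]⟩
  · refine .inr ⟨rfl, fun t ht => ?_⟩
    have hπ0 : t.π0 = s.π0 + -1 := (SIdx.coords_eq_add_iff.1 ht).1
    have := t.hπ0
    omega

lemma isWeightedShift_Lp :
    IsWeightedShift SIdx.coords (0, 0, 1)
      (fun s => ((q ^ (-(3 : ℝ) / 2 - (s.π0 : ℝ)) *
        √((1 + q ^ ((s.π0 : ℝ) - (s.j : ℝ) - w)) * (1 - q ^ ((s.π0 : ℝ) - (s.j : ℝ))) /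
          ((q⁻¹ - 1) * (1 - q))) : ℝ) : ℂ)) (Lp q w) := by
  refine isWeightedShift_opOf fun s => ?_
  split_ifs with h
  · exact .inl ⟨_, rfl, by simp [SIdx.coords]⟩
  · refine .inr ⟨rfl, fun t ht => ?_⟩
    obtain ⟨hπ0, -, hj⟩ := SIdx.coords_eq_add_iff.1 ht
    have := t.hj
    omega

lemma isWeightedShift_Lm :
    IsWeightedShift SIdx.coords (-(0, 0, 1))
      (fun s => ((q ^ (-(s.π0 : ℝ)) *
        √((1 + q ^ ((s.π0 : ℝ) - (s.j : ℝ) + 1 - w)) * (1 - q ^ ((s.π0 : ℝ) - (s.j : ℝ) + 1)) /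
          ((q⁻¹ - 1) * (1 - q))) : ℝ) : ℂ)) (Lm q w) :=
  isWeightedShift_opOf fun _ => .inl ⟨_, rfl, by simp [SIdx.coords, sub_eq_add_neg]⟩

lemma isWeightedShift_Lam : IsWeightedShift SIdx.coords (0, 1, 0) (fun _ => 1) Lam :=
  isWeightedShift_opOf fun _ => .inl ⟨_, (one_smul ℂ (e _)).symm, by simp [SIdx.coords]⟩

lemma isWeightedShift_LamInv : IsWeightedShift SIdx.coords (-(0, 1, 0)) (fun _ => 1) LamInv :=
  isWeightedShift_opOf fun _ =>
    .inl ⟨_, (one_smul ℂ (e _)).symm, by simp [SIdx.coords, sub_eq_add_neg]⟩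

lemma isWeightedShift_opOf_smul_e (a : SIdx → ℂ) :
    IsWeightedShift SIdx.coords 0 a (opOf fun s => a s • e s) :=
  isWeightedShift_opOf fun s => .inl ⟨s, rfl, (add_zero _).symm⟩

end Generators

section Adjoints

variable {q : ℝ} (M w : ℝ)

lemma inn_P1_left (hq0 : 0 < q) (u v : V) :
    inn (P1 q M u) v = ((q ^ ((1 : ℝ) / 2) : ℝ) : ℂ) * inn u (Pm1 q M v) := by
  refine (isWeightedShift_P1 q M).inn_map_left (isWeightedShift_Pm1 q M)
    (fun s t hst => ?_) u v
  obtain ⟨hπ0, hπ1, -⟩ := SIdx.coords_eq_add_iff.1 hst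
  have hpow : q ^ (1 + s.π1) = q ^ ((1 : ℝ) / 2) * q ^ ((1 : ℝ) / 2 + (s.π1 : ℝ)) := by
    rw [← Real.rpow_add hq0, ← Real.rpow_intCast]
    push_cast
    ring_nf
  rw [hπ0, hπ1, add_zero, mul_add, mul_one, hpow, Complex.conj_ofReal]
  push_cast
  ring

lemma inn_Lp_left (hq0 : 0 < q) (u v : V) :
    inn (Lp q w u) v = ((q ^ (-(3 : ℝ) / 2) : ℝ) : ℂ) * inn u (Lm q w v) := by
  refine (isWeightedShift_Lp q w).inn_map_left (isWeightedShift_Lm q w)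
    (fun s t hst => ?_) u v
  obtain ⟨hπ0, -, hj⟩ := SIdx.coords_eq_add_iff.1 hst
  have hpow : q ^ (-(3 : ℝ) / 2 - (s.π0 : ℝ)) = q ^ (-(3 : ℝ) / 2) * q ^ (-(s.π0 : ℝ)) := by
    rw [← Real.rpow_add hq0, sub_eq_add_neg]
  have hdiff : (t.π0 : ℝ) - t.j + 1 = s.π0 - s.j := by
    rw [hπ0, hj]
    push_cast
    ring
  rw [hdiff, hπ0, add_zero, hpow, Complex.conj_ofReal]
  push_cast
  ring

lemma inn_diagonal_left (a : SIdx → ℝ) (u v : V) :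
    inn (opOf (fun s => (a s : ℂ) • e s) u) v = inn u (opOf (fun s => (a s : ℂ) • e s) v) := by
  have hdiag := isWeightedShift_opOf_smul_e fun s => (a s : ℂ)
  rw [← one_mul (inn u _)]
  refine hdiag.inn_map_left (neg_zero (G := ℤ × ℤ × ℤ) ▸ hdiag) (fun s t hst => ?_) u v
  obtain rfl : t = s := SIdx.coords_injective (hst.trans (add_zero _))
  simp

lemma inn_Lam_left (u v : V) : inn (Lam u) v = inn u (LamInv v) := by
  rw [← one_mul (inn u _)]
  exact isWeightedShift_Lam.inn_map_left isWeightedShift_LamInv (fun _ _ _ => by simp) u v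

end Adjoints

theorem star_representation_general (q M ε w : ℝ) (hq0 : 0 < q) (_hq1 : q < 1) (u v : V) :
    inn (P1 q M u) v = ((q ^ ((1 : ℝ) / 2) : ℝ) : ℂ) * inn u (Pm1 q M v) ∧
    inn (Lp q w u) v = ((q ^ (-(3 : ℝ) / 2) : ℝ) : ℂ) * inn u (Lm q w v) ∧
    inn (P0 q M ε u) v = inn u (P0 q M ε v) ∧
    inn (K q w u) v = inn u (K q w v) ∧
    inn (Lam u) v = inn u (LamInv v) :=
  ⟨inn_P1_left M hq0 u v, inn_Lp_left w hq0 u v, inn_diagonal_left _ u v,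
    inn_diagonal_left _ u v, inn_Lam_left u v⟩

/-- With respect to the inner product making the basis orthonormal,
the representation is a `*`-representation: `⟨P₁u,v⟩ = q^(1/2)⟨u,P₋₁v⟩`,
`⟨L⁺u,v⟩ = q^(−3/2)⟨u,L⁻v⟩`, `⟨P₀u,v⟩ = ⟨u,P₀v⟩`, `⟨Ku,v⟩ = ⟨u,Kv⟩`,
`⟨Λu,v⟩ = ⟨u,Λ⁻¹v⟩`. -/
theorem star_representation
    (q M ε w : ℝ) (hq0 : 0 < q) (hq1 : q < 1) (hM : 0 < M)
    (hε : ε = 1 ∨ ε = -1) (hw : 0 ≤ w) :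
    ∀ u v : V,
      inn (P1 q M u) v = ((q ^ ((1 : ℝ) / 2) : ℝ) : ℂ) * inn u (Pm1 q M v) ∧
      inn (Lp q w u) v = ((q ^ (-(3 : ℝ) / 2) : ℝ) : ℂ) * inn u (Lm q w v) ∧
      inn (P0 q M ε u) v = inn u (P0 q M ε v) ∧
      inn (K q w u) v = inn u (K q w v) ∧
      inn (Lam u) v = inn u (LamInv v) :=
  star_representation_general q M ε w hq0 hq1
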